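/- Let α and β be two commuting strongly continuous one-parameter isometric representations on a Banach space E (α_s β_t = β_t α_s for all s, t), and define γ_t = α_t β_t. Then for every z ∈ ℂ, the operator compositions α_z ∘ β_z and β_z ∘ α_z are closable, their closures coincide, and both closures equal the analytic continuation γ_z. -/

import Mathlib

open Complex MeasureTheory Filter Topology Set

noncomputable section

/-- The closed horizontal strip between the real axis and the line `Im = z.im`. -/
def hStrip (z : ℂ) : Set ℂ := {y : ℂ | y.im ∈ Set.uIcc 0 z.im}

/-- A strongly continuous one-parameter (contractive, hence isometric) representation. -/
structure IsOneParamRep {E : Type*} [NormedAddCommGroup E] [NormedSpace ℂ E]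
    (α : ℝ → E →L[ℂ] E) : Prop where
  map_add : ∀ s t : ℝ, α (s + t) = (α s).comp (α t)
  map_zero : α 0 = ContinuousLinearMap.id ℂ E
  norm_le : ∀ t : ℝ, ‖α t‖ ≤ 1
  strong_cont : ∀ a : E, Continuous fun t : ℝ => α t a

/-- `(a, b)` lies in the graph of the analytic continuation `α_z`:  there is a function `f`,
continuous on the strip `S(z)`, analytic in its interior, agreeing with `t ↦ α_t a` on `ℝ`,
with `f z = b`. -/
def HasContVal {E : Type*} [NormedAddCommGroup E] [NormedSpace ℂ E]
    (α : ℝ → E →L[ℂ] E) (z : ℂ) (a b : E) : Prop :=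
  ∃ f : ℂ → E, ContinuousOn f (hStrip z) ∧
    DifferentiableOn ℂ f (interior (hStrip z)) ∧
    (∀ t : ℝ, f t = α t a) ∧ f z = b

/-!
Averaging `β` against a Gaussian centred at a complex time `w` gives operators `S w`, entire in
`w`, with `S (w + s) = β_s (S w)` for real `s`. If `f` extends the orbit of `a` under a
representation `ρ` commuting with `β`, then `w ↦ S (u + w) (f w)` extends the orbit of `S u a`
under `ρ_t β_t`. For `ρ = α`, and for `ρ_t = α_t β_t` smeared along `β_{-t}`, this shows that
`S 0` maps the graphs of `α_z ∘ β_z` and `γ_z` into each other. As the Gaussian narrows, `S 0`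
tends strongly to the identity, and the graph of `γ_z` is closed by the maximum principle on the
strip.
-/

/-- Functions that are continuous on `S` and holomorphic in its interior, which is what the
definition of `α_z` asks of an extended orbit. This differs from `DiffContOnCl ℂ f (interior S)`
when `S` is a line, as the strip `hStrip z` is for real `z`. -/
def IsRegularOn {F : Type*} [NormedAddCommGroup F] [NormedSpace ℂ F] (f : ℂ → F) (S : Set ℂ) :
    Prop :=
  ContinuousOn f S ∧ DifferentiableOn ℂ f (interior S)

section Regular

variable {F G : Type*} [NormedAddCommGroup F] [NormedSpace ℂ F] [NormedAddCommGroup G]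
  [NormedSpace ℂ G] {f g : ℂ → F} {S : Set ℂ}

lemma IsRegularOn.const (v : F) : IsRegularOn (fun _ => v) S :=
  ⟨continuousOn_const, differentiableOn_const v⟩

lemma IsRegularOn.sub (hf : IsRegularOn f S) (hg : IsRegularOn g S) :
    IsRegularOn (fun w => f w - g w) S :=
  ⟨hf.1.sub hg.1, hf.2.sub hg.2⟩

lemma IsRegularOn.clm_comp (T : F →L[ℂ] G) (hf : IsRegularOn f S) :
    IsRegularOn (fun w => T (f w)) S :=
  ⟨T.continuous.comp_continuousOn hf.1, T.differentiable.comp_differentiableOn hf.2⟩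

lemma IsRegularOn.smul {c : ℂ → ℂ} (hc : Differentiable ℂ c) (hf : IsRegularOn f S) :
    IsRegularOn (fun w => c w • f w) S :=
  ⟨hc.continuous.continuousOn.smul hf.1, hc.differentiableOn.smul hf.2⟩

lemma IsRegularOn.diffContOnCl (hf : IsRegularOn f S) (hS : IsClosed S) :
    DiffContOnCl ℂ f (interior S) :=
  ⟨hf.2, hf.1.mono (closure_minimal interior_subset hS)⟩

lemma IsRegularOn.of_tendstoUniformlyOn [CompleteSpace F] {ι : Type*} {l : Filter ι} [l.NeBot]
    {f : ι → ℂ → F} (h : TendstoUniformlyOn f g l S) (hf : ∀ i, IsRegularOn (f i) S) :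
    IsRegularOn g S :=
  ⟨h.continuousOn (Frequently.of_forall fun i => (hf i).1),
    (h.mono interior_subset).tendstoLocallyUniformlyOn.differentiableOn
      (Eventually.of_forall fun i => (hf i).2) isOpen_interior⟩

variable {X : Type*} [MeasurableSpace X] {μ : Measure X} {Φ : ℂ → X → F}

/-- The derivative is measurable as a limit of difference quotients. -/
lemma aestronglyMeasurable_deriv_of_differentiableOn {U : Set ℂ} (hU : IsOpen U)
    (hmeas : ∀ w ∈ U, AEStronglyMeasurable (Φ w) μ)
    (hdiff : ∀ᵐ x ∂μ, DifferentiableOn ℂ (fun w => Φ w x) U) {w₀ : ℂ} (hw₀ : w₀ ∈ U) :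
    AEStronglyMeasurable (fun x => deriv (fun w => Φ w x) w₀) μ := by
  have hmem : ∀ᶠ w in 𝓝[≠] w₀, w ∈ U := nhdsWithin_le_nhds (hU.mem_nhds hw₀)
  obtain ⟨u, hu, huU⟩ := exists_seq_forall_of_frequently hmem.frequently
  refine aestronglyMeasurable_of_tendsto_ae atTop
    (f := fun n x => slope (fun w => Φ w x) w₀ (u n)) (fun n => ?_) ?_
  · simp only [slope_def_module]
    exact ((hmeas _ (huU n)).sub (hmeas w₀ hw₀)).const_smul _
  · filter_upwards [hdiff] with x hx
    have hderiv := (hx.differentiableAt (hU.mem_nhds hw₀)).hasDerivAt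
    exact (hasDerivAt_iff_tendsto_slope.1 hderiv).comp hu

/-- Cauchy's estimate turns the local bound on the integrand into one on its derivative. -/
lemma differentiableOn_integral_of_dominated {U : Set ℂ} (hU : IsOpen U)
    (hmeas : ∀ w ∈ U, AEStronglyMeasurable (Φ w) μ)
    (hdiff : ∀ᵐ x ∂μ, DifferentiableOn ℂ (fun w => Φ w x) U)
    (hbound : ∀ w₀ ∈ U, ∃ V ∈ 𝓝 w₀, ∃ b : X → ℝ, Integrable b μ ∧
      ∀ᵐ x ∂μ, ∀ w ∈ V, ‖Φ w x‖ ≤ b x) :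
    DifferentiableOn ℂ (fun w => ∫ x, Φ w x ∂μ) U := by
  intro w₀ hw₀
  obtain ⟨V, hV, b, hb, hΦb⟩ := hbound w₀ hw₀
  obtain ⟨R, hR, hball⟩ :=
    Metric.nhds_basis_closedBall.mem_iff.1 (inter_mem hV (hU.mem_nhds hw₀))
  have hball' : Metric.ball w₀ (R / 2) ⊆ U := fun w hw => (hball
    (Metric.ball_subset_closedBall (Metric.ball_subset_ball (half_le_self hR.le) hw))).2
  have hderiv : ∀ᵐ x ∂μ, ∀ w ∈ Metric.ball w₀ (R / 2),
      ‖deriv (fun w => Φ w x) w‖ ≤ b x / (R / 2) := by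
    filter_upwards [hdiff, hΦb] with x hx hxb w hw
    have hsub : Metric.closedBall w (R / 2) ⊆ Metric.closedBall w₀ R :=
      Metric.closedBall_subset_closedBall' (by linarith [Metric.mem_ball.1 hw])
    refine Complex.norm_deriv_le_of_forall_mem_sphere_norm_le (half_pos hR) ?_ fun v hv =>
      hxb v (hball (hsub (Metric.sphere_subset_closedBall hv))).1
    exact hx.diffContOnCl_ball fun v hv => (hball (hsub hv)).2
  have hint : Integrable (Φ w₀) μ := hb.mono' (hmeas w₀ hw₀) <| by
    filter_upwards [hΦb] with x hx using hx w₀ (mem_of_mem_nhds hV)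
  refine (hasDerivAt_integral_of_dominated_loc_of_deriv_le
    (F' := fun w x => deriv (fun w => Φ w x) w) (Metric.ball_mem_nhds w₀ (half_pos hR))
    (eventually_of_mem (hU.mem_nhds hw₀) hmeas) hint
    (aestronglyMeasurable_deriv_of_differentiableOn hU hmeas hdiff hw₀) hderiv
    (hb.div_const _) ?_).2.differentiableAt.differentiableWithinAt
  filter_upwards [hdiff] with x hx w hw
  exact (hx.differentiableAt (hU.mem_nhds (hball' hw))).hasDerivAt

lemma IsRegularOn.integral (hmeas : ∀ w ∈ S, AEStronglyMeasurable (Φ w) μ)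
    (hreg : ∀ᵐ x ∂μ, IsRegularOn (fun w => Φ w x) S)
    (hbound : ∀ w₀ ∈ S, ∃ V ∈ 𝓝[S] w₀, ∃ b : X → ℝ, Integrable b μ ∧
      ∀ᵐ x ∂μ, ∀ w ∈ V, ‖Φ w x‖ ≤ b x) :
    IsRegularOn (fun w => ∫ x, Φ w x ∂μ) S := by
  refine ⟨fun w₀ hw₀ => ?_, differentiableOn_integral_of_dominated isOpen_interior
    (fun w hw => hmeas w (interior_subset hw)) (hreg.mono fun x hx => hx.2) fun w₀ hw₀ => ?_⟩
  · obtain ⟨V, hV, b, hb, hΦb⟩ := hbound w₀ hw₀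
    refine continuousWithinAt_of_dominated (eventually_of_mem self_mem_nhdsWithin hmeas)
      (eventually_of_mem hV fun w hw => ?_) hb (hreg.mono fun x hx => hx.1 w₀ hw₀)
    filter_upwards [hΦb] with x hx using hx w hw
  · obtain ⟨V, hV, b, hb, hΦb⟩ := hbound w₀ (interior_subset hw₀)
    rw [nhdsWithin_eq_nhds.2 (mem_interior_iff_mem_nhds.1 hw₀)] at hV
    exact ⟨V, hV, b, hb, hΦb⟩

end Regular

section Strip

lemma ofReal_mem_hStrip (z : ℂ) (s : ℝ) : (s : ℂ) ∈ hStrip z := by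
  simp [hStrip]

lemma self_mem_hStrip (z : ℂ) : z ∈ hStrip z := by
  simp [hStrip]

lemma isClosed_hStrip (z : ℂ) : IsClosed (hStrip z) :=
  isClosed_Icc.preimage Complex.continuous_im

lemma interior_hStrip (z : ℂ) :
    interior (hStrip z) = im ⁻¹' Set.Ioo (min 0 z.im) (max 0 z.im) := by
  change interior (im ⁻¹' Set.Icc _ _) = _
  rw [interior_preimage_im, interior_Icc]

lemma closure_interior_hStrip {z : ℂ} (hz : z.im ≠ 0) :
    closure (interior (hStrip z)) = hStrip z := by
  rw [interior_hStrip, closure_preimage_im, closure_Ioo (by simpa [eq_comm] using hz)]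
  rfl

lemma im_eq_zero_or_eq_of_notMem_interior_hStrip {z w : ℂ} (hw : w ∈ hStrip z)
    (hw' : w ∉ interior (hStrip z)) : w.im = 0 ∨ w.im = z.im := by
  rw [interior_hStrip] at hw'
  simp only [hStrip, Set.mem_ofPred_eq, Set.mem_preimage, Set.mem_Ioo, not_and_or, not_lt,
    Set.mem_uIcc, min_def, max_def] at hw hw'
  grind

lemma abs_im_le_abs_im_add_im {z w : ℂ} (hw : w ∈ hStrip z) : |z.im| ≤ |w.im + z.im| := by
  rcases Set.mem_uIcc.1 hw with h | h
  · rw [abs_of_nonneg (by linarith), abs_of_nonneg (by linarith)]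
    linarith
  · rw [abs_of_nonpos (by linarith), abs_of_nonpos (by linarith)]
    linarith

lemma abs_im_add_im_lt {z w : ℂ} (hw : w ∈ interior (hStrip z)) :
    |w.im + z.im| < 2 * |z.im| := by
  rw [interior_hStrip] at hw
  rcases le_total 0 z.im with h | h
  · simp only [min_eq_left h, max_eq_right h, Set.mem_preimage, Set.mem_Ioo] at hw
    rw [abs_of_nonneg h, abs_of_nonneg (by linarith)]
    linarith
  · simp only [min_eq_right h, max_eq_left h, Set.mem_preimage, Set.mem_Ioo] at hw
    rw [abs_of_nonpos h, abs_of_nonpos (by linarith)]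
    linarith

variable {F : Type*} [NormedAddCommGroup F] [NormedSpace ℂ F] {f g : ℂ → F} {z w : ℂ}

lemma IsRegularOn.comp_add_ofReal (hf : IsRegularOn f (hStrip z)) (s : ℝ) :
    IsRegularOn (fun w => f (w + s)) (hStrip z) := by
  refine ⟨hf.1.comp (by fun_prop) fun w hw => ?_, hf.2.comp (by fun_prop) fun w hw => ?_⟩
  · simpa [hStrip] using hw
  · simpa [interior_hStrip] using hw

/-- The maximum principle for `q ^ k • f` bounds `‖q c‖ ^ k * ‖f c‖` uniformly in `k`. -/
lemma eq_zero_of_norm_le_one_on_frontier {V : Type*} [NormedAddCommGroup V] [NormedSpace ℂ V]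
    [ProperSpace V] [Nontrivial V] {U : Set V} (hU : Bornology.IsBounded U) {f : V → F}
    (hf : DiffContOnCl ℂ f U) {q : V → ℂ} (hq : DiffContOnCl ℂ q U)
    (hfq : ∀ v ∈ frontier U, f v ≠ 0 → ‖q v‖ ≤ 1) {c : V} (hc : c ∈ U) (hqc : 1 < ‖q c‖) :
    f c = 0 := by
  obtain ⟨M, hM⟩ := hU.isCompact_closure.exists_bound_of_continuousOn hf.continuousOn
  have hpow (k : ℕ) : ‖q c‖ ^ k * ‖f c‖ ≤ M := by
    have hqk : DiffContOnCl ℂ (fun v => q v ^ k) U := ⟨hq.1.pow k, hq.2.pow k⟩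
    rw [← norm_pow, ← norm_smul]
    refine Complex.norm_le_of_forall_mem_frontier_norm_le hU (hqk.smul hf) (fun v hv => ?_)
      (subset_closure hc)
    have hvM : ‖f v‖ ≤ M := hM v (frontier_subset_closure hv)
    rw [norm_smul, norm_pow]
    by_cases hfv : f v = 0
    · simpa [hfv] using hvM
    · exact (mul_le_of_le_one_left (norm_nonneg _)
        (pow_le_one₀ (norm_nonneg _) (hfq v hv hfv))).trans hvM
  by_contra hfc
  obtain ⟨k, hk⟩ := pow_unbounded_of_one_lt (M / ‖f c‖) hqc
  exact ((div_lt_iff₀ (norm_pos_iff.2 hfc)).1 hk).not_ge (hpow k)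

lemma im_eq_zero_or_le_norm_sub_of_mem_frontier {p v : ℂ} (hp : p.im = -z.im)
    (hv : v ∈ frontier (interior (hStrip z) ∩ Metric.ball p (2 * |z.im|))) :
    v.im = 0 ∨ 2 * |z.im| ≤ ‖v - p‖ := by
  rw [(isOpen_interior.inter Metric.isOpen_ball).frontier_eq] at hv
  have hvS : v ∈ hStrip z :=
    closure_minimal (inter_subset_left.trans interior_subset) (isClosed_hStrip z) hv.1
  refine or_iff_not_imp_right.2 fun hlt => ?_
  rw [not_le] at hlt
  refine (im_eq_zero_or_eq_of_notMem_interior_hStrip hvS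
    fun hint => hv.2 ⟨hint, mem_ball_iff_norm.2 hlt⟩).resolve_right fun h => ?_
  have him : |(v - p).im| = 2 * |z.im| := by
    rw [sub_im, hp, h, sub_neg_eq_add, ← two_mul, abs_mul, abs_two]
  exact ((him.symm.trans_le (Complex.abs_im_le_norm _)).trans_lt hlt).false

/-- The disc about the point `p` cuts off a bounded piece of the strip, on whose
circular edge `2 * |z.im| / (v - p)` has norm one, while it is larger at `w`. -/
lemma IsRegularOn.eq_zero_of_mem_interior (hf : IsRegularOn f (hStrip z))
    (h0 : ∀ t : ℝ, f t = 0) (hw : w ∈ interior (hStrip z)) : f w = 0 := by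
  have hz : 0 < |z.im| := by linarith [abs_im_add_im_lt hw, abs_nonneg (w.im + z.im)]
  set p : ℂ := ⟨w.re, -z.im⟩
  set r : ℝ := 2 * |z.im|
  have im_sub_p (v : ℂ) : (v - p).im = v.im + z.im := by simp [p]
  have sub_p_ne_zero : ∀ v ∈ hStrip z, v - p ≠ 0 := fun v hv hvp => by
    have := abs_im_le_abs_im_add_im hv
    rw [← im_sub_p, hvp, zero_im, abs_zero] at this
    linarith
  have norm_w_sub_p : ‖w - p‖ < r := by
    have : w - p = ((w.im + z.im : ℝ) : ℂ) * I := Complex.ext (by simp [p]) (by simp [p])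
    simpa [this, ← ofReal_add] using abs_im_add_im_lt hw
  set U : Set ℂ := interior (hStrip z) ∩ Metric.ball p r
  have hU : closure U ⊆ hStrip z :=
    closure_minimal (inter_subset_left.trans interior_subset) (isClosed_hStrip z)
  have hq : DifferentiableOn ℂ (fun v => (r : ℂ) / (v - p)) (closure U) :=
    (differentiableOn_const _).fun_div (by fun_prop) fun v hv => sub_p_ne_zero v (hU hv)
  refine eq_zero_of_norm_le_one_on_frontier (Metric.isBounded_ball.subset inter_subset_right)
    ((hf.diffContOnCl (isClosed_hStrip z)).mono inter_subset_left) hq.diffContOnCl ?_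
    ⟨hw, mem_ball_iff_norm.2 norm_w_sub_p⟩ ?_
  · intro v hv hfv
    have hr : r ≤ ‖v - p‖ := (im_eq_zero_or_le_norm_sub_of_mem_frontier rfl hv).resolve_left
      fun h => hfv (by rw [← h0 v.re, ← (Complex.ext rfl (by simp [h]) : v = (v.re : ℂ))])
    rw [norm_div, Complex.norm_of_nonneg (by positivity)]
    exact div_le_one_of_le₀ hr (norm_nonneg _)
  · rw [norm_div, Complex.norm_of_nonneg (by positivity)]
    exact (one_lt_div (norm_pos_iff.2 (sub_p_ne_zero w (interior_subset hw)))).2 norm_w_sub_p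

lemma IsRegularOn.eq_of_eq_on_real (hf : IsRegularOn f (hStrip z))
    (hg : IsRegularOn g (hStrip z)) (h : ∀ t : ℝ, f t = g t) (hw : w ∈ hStrip z) :
    f w = g w := by
  rcases eq_or_ne z.im 0 with hz | hz
  · have hw0 : w.im = 0 := by simpa [hStrip, hz] using hw
    rw [(Complex.ext rfl (by simp [hw0]) : w = (w.re : ℂ)), h]
  · have hint : Set.EqOn f g (interior (hStrip z)) := fun v hv => sub_eq_zero.1 <|
      (hf.sub hg).eq_zero_of_mem_interior (fun t => sub_eq_zero.2 (h t)) hv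
    exact hint.of_subset_closure hf.1 hg.1 interior_subset (closure_interior_hStrip hz).ge hw

lemma IsRegularOn.norm_le_of_norm_le_on_boundary (hf : IsRegularOn f (hStrip z)) {B C : ℝ}
    (hB : ∀ v ∈ hStrip z, ‖f v‖ ≤ B) (h0 : ∀ t : ℝ, ‖f t‖ ≤ C)
    (h1 : ∀ t : ℝ, ‖f (z + t)‖ ≤ C) (hw : w ∈ hStrip z) : ‖f w‖ ≤ C := by
  have h0' (v : ℂ) (hv : v.im = 0) : ‖f v‖ ≤ C := by
    rw [(Complex.ext rfl (by simp [hv]) : v = (v.re : ℂ))]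
    exact h0 _
  have h1' (v : ℂ) (hv : v.im = z.im) : ‖f v‖ ≤ C := by
    rw [(Complex.ext (by simp) (by simp [hv]) : v = z + ((v.re - z.re : ℝ) : ℂ))]
    exact h1 _
  have hd := hf.diffContOnCl (isClosed_hStrip z)
  rw [interior_hStrip] at hd
  refine PhragmenLindelof.horizontal_strip hd
    ⟨-1, ?_, 0, Asymptotics.IsBigO.of_bound B ?_⟩ (fun v hv => ?_) (fun v hv => ?_) hw.1 hw.2
  · have : 0 ≤ Real.pi / (max 0 z.im - min 0 z.im) :=
      div_nonneg Real.pi_pos.le (sub_nonneg.2 min_le_max)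
    linarith
  · filter_upwards [mem_inf_of_right (mem_principal_self _)] with v hv
    simpa using hB v (Ioo_subset_Icc_self hv)
  · rcases min_choice 0 z.im with h | h
    exacts [h0' v (hv.trans h), h1' v (hv.trans h)]
  · rcases max_choice 0 z.im with h | h
    exacts [h0' v (hv.trans h), h1' v (hv.trans h)]

end Strip

section Representation

variable {E : Type*} [NormedAddCommGroup E] [NormedSpace ℂ E] {α β : ℝ → E →L[ℂ] E}

lemma IsOneParamRep.norm_apply_le (hα : IsOneParamRep α) (t : ℝ) (a : E) : ‖α t a‖ ≤ ‖a‖ := by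
  simpa using (α t).le_of_opNorm_le (hα.norm_le t) a

lemma IsOneParamRep.apply_add (hα : IsOneParamRep α) (s t : ℝ) (a : E) :
    α (s + t) a = α s (α t a) :=
  DFunLike.congr_fun (hα.map_add s t) a

lemma IsOneParamRep.comp_comm (hα : IsOneParamRep α) (s t : ℝ) :
    (α s).comp (α t) = (α t).comp (α s) := by
  rw [← hα.map_add, ← hα.map_add, add_comm]

lemma IsOneParamRep.comp_neg (hα : IsOneParamRep α) (t : ℝ) :
    (α t).comp (α (-t)) = ContinuousLinearMap.id ℂ E := by
  rw [← hα.map_add, add_neg_cancel, hα.map_zero]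

lemma IsOneParamRep.continuous_apply (hα : IsOneParamRep α) {x : ℝ → E} (hx : Continuous x) :
    Continuous fun t => α t (x t) := by
  refine continuous_iff_continuousAt.2 fun t => ?_
  have hdiff : Tendsto (fun s => α s (x s - x t)) (𝓝 t) (𝓝 0) :=
    squeeze_zero_norm (fun s => hα.norm_apply_le s _)
      (tendsto_iff_norm_sub_tendsto_zero.1 (hx.tendsto t))
  simpa [ContinuousAt] using ((hα.strong_cont (x t)).tendsto t).add hdiff

lemma IsOneParamRep.comp (hα : IsOneParamRep α) (hβ : IsOneParamRep β)
    (hcomm : ∀ s t : ℝ, (α s).comp (β t) = (β t).comp (α s)) :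
    IsOneParamRep fun t => (α t).comp (β t) where
  map_add s t := by
    rw [hα.map_add, hβ.map_add, ContinuousLinearMap.comp_assoc,
      ← ContinuousLinearMap.comp_assoc (α t), hcomm]
    rfl
  map_zero := by simp [hα.map_zero, hβ.map_zero]
  norm_le t := (ContinuousLinearMap.opNorm_comp_le _ _).trans
    (mul_le_one₀ (hα.norm_le t) (norm_nonneg _) (hβ.norm_le t))
  strong_cont a := hα.continuous_apply (hβ.strong_cont a)

lemma IsOneParamRep.neg (hα : IsOneParamRep α) : IsOneParamRep fun t => α (-t) where
  map_add s t := by rw [neg_add, hα.map_add]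
  map_zero := by simp [hα.map_zero]
  norm_le t := hα.norm_le (-t)
  strong_cont a := (hα.strong_cont a).comp continuous_neg

end Representation

section Continuation

variable {E : Type*} [NormedAddCommGroup E] [NormedSpace ℂ E] {α : ℝ → E →L[ℂ] E} {f : ℂ → E}
  {z w : ℂ} {a b : E}

lemma hasContVal_iff_exists_isRegularOn : HasContVal α z a b ↔
    ∃ f : ℂ → E, IsRegularOn f (hStrip z) ∧ (∀ t : ℝ, f t = α t a) ∧ f z = b := by
  simp only [HasContVal, IsRegularOn, and_assoc]

lemma HasContVal.eq_of_id (h : HasContVal (fun _ => ContinuousLinearMap.id ℂ E) z a b) :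
    a = b := by
  obtain ⟨f, hf, hfa, rfl⟩ := hasContVal_iff_exists_isRegularOn.1 h
  exact (IsRegularOn.const a).eq_of_eq_on_real hf (fun t => (hfa t).symm) (self_mem_hStrip z)

lemma IsRegularOn.orbit_add_ofReal (hα : IsOneParamRep α) (hf : IsRegularOn f (hStrip z))
    (hfa : ∀ t : ℝ, f t = α t a) (hw : w ∈ hStrip z) (s : ℝ) : f (w + s) = α s (f w) := by
  refine (hf.comp_add_ofReal s).eq_of_eq_on_real (hf.clm_comp (α s)) (fun t => ?_) hw
  rw [hfa, ← ofReal_add, hfa, add_comm, hα.apply_add]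

/-- Since real translations act through `α`, the extended orbit is bounded by its values on a
compact cross-section of the strip, so that the maximum principle applies. -/
lemma IsRegularOn.norm_orbit_le_max (hα : IsOneParamRep α) (hf : IsRegularOn f (hStrip z))
    (hfa : ∀ t : ℝ, f t = α t a) (hw : w ∈ hStrip z) : ‖f w‖ ≤ max ‖a‖ ‖f z‖ := by
  set K : Set ℂ := (fun y : ℝ => (y : ℂ) * I) '' Set.uIcc 0 z.im
  have hK : IsCompact K := isCompact_uIcc.image (by fun_prop)
  have hKS : K ⊆ hStrip z := by
    rintro _ ⟨y, hy, rfl⟩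
    simpa [hStrip] using hy
  obtain ⟨B, hB⟩ := hK.exists_bound_of_continuousOn (hf.1.mono hKS)
  refine hf.norm_le_of_norm_le_on_boundary (B := B) (fun v hv => ?_) (fun t => ?_)
    (fun t => ?_) hw
  · have hvK : (v.im : ℂ) * I ∈ K := Set.mem_image_of_mem _ hv
    rw [← re_add_im v, add_comm, hf.orbit_add_ofReal hα hfa (hKS hvK)]
    exact (hα.norm_apply_le _ _).trans (hB _ hvK)
  · rw [hfa]
    exact (hα.norm_apply_le _ _).trans (le_max_left _ _)
  · rw [hf.orbit_add_ofReal hα hfa (self_mem_hStrip z)]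
    exact (hα.norm_apply_le _ _).trans (le_max_right _ _)

lemma IsOneParamRep.isClosed_setOf_hasContVal [CompleteSpace E] (hα : IsOneParamRep α) (z : ℂ) :
    IsClosed {p : E × E | HasContVal α z p.1 p.2} := by
  refine IsSeqClosed.isClosed fun p q hp hpq => ?_
  choose f hf hfa hfz using fun n => hasContVal_iff_exists_isRegularOn.1 (hp n)
  have hdist (m n : ℕ) : ∀ w ∈ hStrip z, dist (f m w) (f n w) ≤ dist (p m) (p n) := by
    intro w hw
    have := ((hf m).sub (hf n)).norm_orbit_le_max hα (a := (p m).1 - (p n).1)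
      (fun t => by rw [hfa, hfa, map_sub]) hw
    rwa [hfz, hfz, ← dist_eq_norm, ← dist_eq_norm, ← dist_eq_norm, ← Prod.dist_eq] at this
  have hcauchy : UniformCauchySeqOn f atTop (hStrip z) := by
    refine Metric.uniformCauchySeqOn_iff.2 fun ε hε => ?_
    obtain ⟨N, hN⟩ := Metric.cauchySeq_iff.1 hpq.cauchySeq ε hε
    exact ⟨N, fun m hm n hn w hw => (hdist m n w hw).trans_lt (hN m hm n hn)⟩
  choose! g hg using fun w (hw : w ∈ hStrip z) =>
    cauchySeq_tendsto_of_complete (hcauchy.cauchySeq hw)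
  refine hasContVal_iff_exists_isRegularOn.2
    ⟨g, .of_tendstoUniformlyOn (hcauchy.tendstoUniformlyOn_of_tendsto hg) hf, fun t => ?_, ?_⟩
  · refine tendsto_nhds_unique (hg t (ofReal_mem_hStrip z t)) ?_
    simpa only [hfa, Function.comp_def] using ((α t).continuous.tendsto _).comp hpq.fst_nhds
  · refine tendsto_nhds_unique (hg z (self_mem_hStrip z)) ?_
    simpa only [hfz] using hpq.snd_nhds

end Continuation

section Gaussian

/-- The Gaussian `s ↦ exp (-π s²)` as an entire function, the kernel of `IsOneParamRep.smear`;
its exponent is normalised to give integral one. -/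
def gaussKernel (s : ℂ) : ℂ := cexp (-Real.pi * s ^ 2)

/-- A real Gaussian which dominates the translates of `gaussKernel` by complex numbers of norm at
most `r`. -/
def gaussBound (r t : ℝ) : ℝ := Real.exp (Real.pi * r ^ 2) * Real.exp (-(Real.pi / 2) * t ^ 2)

lemma differentiable_gaussKernel : Differentiable ℂ gaussKernel := by
  unfold gaussKernel
  fun_prop

lemma gaussKernel_neg (s : ℂ) : gaussKernel (-s) = gaussKernel s := by
  rw [gaussKernel, gaussKernel, neg_sq]

lemma integral_gaussKernel : ∫ t : ℝ, gaussKernel t = 1 := by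
  have h := integral_gaussian_complex (b := Real.pi) (by simpa using Real.pi_pos)
  rwa [div_self (by simp [Real.pi_ne_zero]), one_cpow] at h

lemma gaussBound_nonneg (r t : ℝ) : 0 ≤ gaussBound r t := by
  unfold gaussBound
  positivity

lemma integrable_gaussBound (r : ℝ) : Integrable (gaussBound r) :=
  (integrable_exp_neg_mul_sq (by positivity)).const_mul _

lemma norm_gaussKernel_sub_le {r : ℝ} {w : ℂ} (hw : ‖w‖ ≤ r) (t : ℝ) :
    ‖gaussKernel (t - w)‖ ≤ gaussBound r t := by
  have hre : (-Real.pi * (t - w) ^ 2 : ℂ).re = -Real.pi * ((t - w.re) ^ 2 - w.im ^ 2) := by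
    simp [sq]
  have hr : w.re ^ 2 + w.im ^ 2 ≤ r ^ 2 := by
    calc w.re ^ 2 + w.im ^ 2 = ‖w‖ ^ 2 := by rw [Complex.sq_norm, normSq_apply, sq, sq]
      _ ≤ r ^ 2 := by gcongr
  rw [gaussKernel, gaussBound, Complex.norm_exp, hre, ← Real.exp_add, Real.exp_le_exp]
  have hquad : 0 ≤ r ^ 2 - t ^ 2 / 2 + (t - w.re) ^ 2 - w.im ^ 2 := by
    linarith [sq_nonneg (t - 2 * w.re)]
  linarith [mul_nonneg Real.pi_pos.le hquad]

end Gaussian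

section Smear

variable {E : Type*} [NormedAddCommGroup E] [NormedSpace ℂ E] {β : ℝ → E →L[ℂ] E}

lemma IsOneParamRep.continuous_smear_integrand (hβ : IsOneParamRep β) (ε : ℝ) (w : ℂ) (v : E) :
    Continuous fun t : ℝ => gaussKernel (t - w / ε) • β (ε * t) v :=
  (differentiable_gaussKernel.continuous.comp (by fun_prop)).smul
    ((hβ.strong_cont v).comp (by fun_prop))

lemma IsOneParamRep.norm_smear_integrand_le (hβ : IsOneParamRep β) {ε r C : ℝ} {w : ℂ} {v : E}
    (hw : ‖w / ε‖ ≤ r) (hv : ‖v‖ ≤ C) (t : ℝ) :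
    ‖gaussKernel (t - w / ε) • β (ε * t) v‖ ≤ gaussBound r t * C := by
  rw [norm_smul]
  exact mul_le_mul (norm_gaussKernel_sub_le hw t) ((hβ.norm_apply_le _ _).trans hv)
    (norm_nonneg _) (gaussBound_nonneg _ _)

lemma IsOneParamRep.integrable_smear_integrand (hβ : IsOneParamRep β) (ε : ℝ) (w : ℂ) (v : E) :
    Integrable fun t : ℝ => gaussKernel (t - w / ε) • β (ε * t) v :=
  ((integrable_gaussBound ‖w / ε‖).mul_const ‖v‖).mono'
    (hβ.continuous_smear_integrand ε w v).aestronglyMeasurable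
    (Eventually.of_forall (hβ.norm_smear_integrand_le le_rfl le_rfl))

/-- The Gaussian average of `β` of width `ε` centred at the complex time `w`, that is
`v ↦ ε⁻¹ ∫ exp (-π ((t - w) / ε)²) β_t v dt` for `ε > 0`, with `t` rescaled by `ε` so that the
limit `ε → 0` only concerns the argument of `β`. -/
def IsOneParamRep.smear (hβ : IsOneParamRep β) (ε : ℝ) (w : ℂ) : E →L[ℂ] E :=
  LinearMap.mkContinuous
    { toFun := fun v => ∫ t : ℝ, gaussKernel (t - w / ε) • β (ε * t) v
      map_add' := fun u v => by
        simp only [_root_.map_add, smul_add]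
        exact integral_add (hβ.integrable_smear_integrand ε w u)
          (hβ.integrable_smear_integrand ε w v)
      map_smul' := fun c v => by
        simp only [map_smul, smul_comm _ c, RingHom.id_apply, integral_smul] }
    (∫ t, gaussBound ‖w / ε‖ t) fun v => by
      rw [← integral_mul_const]
      exact norm_integral_le_of_norm_le ((integrable_gaussBound _).mul_const _)
        (Eventually.of_forall (hβ.norm_smear_integrand_le le_rfl le_rfl))

lemma IsOneParamRep.smear_apply (hβ : IsOneParamRep β) (ε : ℝ) (w : ℂ) (v : E) :
    hβ.smear ε w v = ∫ t : ℝ, gaussKernel (t - w / ε) • β (ε * t) v :=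
  rfl

lemma IsOneParamRep.smear_neg (hβ : IsOneParamRep β) (ε : ℝ) (w : ℂ) :
    hβ.neg.smear ε w = hβ.smear ε (-w) := by
  ext v
  rw [smear_apply, smear_apply, ← integral_neg_eq_self]
  refine integral_congr_ae (Eventually.of_forall fun t => ?_)
  have hcentre : ((-t : ℝ) : ℂ) - w / ε = -(t - -w / ε) := by
    push_cast
    ring
  simp only [hcentre, gaussKernel_neg, mul_neg, neg_neg]

lemma IsRegularOn.smear (hβ : IsOneParamRep β) {f : ℂ → E} {S : Set ℂ} (hf : IsRegularOn f S)
    (ε : ℝ) (u : ℂ) : IsRegularOn (fun w => hβ.smear ε (u + w) (f w)) S := by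
  refine IsRegularOn.integral
    (fun w _ => (hβ.continuous_smear_integrand ε (u + w) (f w)).aestronglyMeasurable)
    (Eventually.of_forall fun t => (hf.clm_comp (β (ε * t))).smul
      (differentiable_gaussKernel.comp (by fun_prop))) fun w₀ hw₀ => ?_
  have hcentre : ∀ᶠ w in 𝓝[S] w₀, ‖(u + w) / ε‖ < ‖(u + w₀) / ε‖ + 1 :=
    (Continuous.continuousWithinAt (by fun_prop)).eventually_lt_const (lt_add_one _)
  have hvalue : ∀ᶠ w in 𝓝[S] w₀, ‖f w‖ < ‖f w₀‖ + 1 :=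
    (hf.1 w₀ hw₀).norm.eventually_lt_const (lt_add_one _)
  exact ⟨_, hcentre.and hvalue, _, (integrable_gaussBound _).mul_const _,
    Eventually.of_forall fun t w hw => hβ.norm_smear_integrand_le hw.1.le hw.2.le t⟩

variable [CompleteSpace E]

lemma IsOneParamRep.apply_smear (hβ : IsOneParamRep β) {T : E →L[ℂ] E}
    (hT : ∀ t, T.comp (β t) = (β t).comp T) (ε : ℝ) (w : ℂ) (v : E) :
    T (hβ.smear ε w v) = hβ.smear ε w (T v) := by
  rw [smear_apply, ← T.integral_comp_comm (hβ.integrable_smear_integrand ε w v)]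
  refine integral_congr_ae (Eventually.of_forall fun t => ?_)
  simp only [map_smul, show T (β (ε * t) v) = β (ε * t) (T v) from DFunLike.congr_fun (hT _) v]

lemma IsOneParamRep.smear_add_ofReal (hβ : IsOneParamRep β) {ε : ℝ} (hε : ε ≠ 0) (w : ℂ) (s : ℝ)
    (v : E) : hβ.smear ε (w + s) v = β s (hβ.smear ε w v) := by
  rw [hβ.apply_smear (hβ.comp_comm s), smear_apply, smear_apply,
    ← integral_add_right_eq_self _ (s / ε)]
  refine integral_congr_ae (Eventually.of_forall fun t => ?_)
  have hcentre : ((t + s / ε : ℝ) : ℂ) - (w + s) / ε = t - w / ε := by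
    push_cast
    ring
  have htime : ε * (t + s / ε) = ε * t + s := by field_simp
  simp only [hcentre, htime, hβ.apply_add]

lemma IsOneParamRep.tendsto_smear_zero (hβ : IsOneParamRep β) (v : E) :
    Tendsto (fun ε => hβ.smear ε 0 v) (𝓝 0) (𝓝 v) := by
  have hv : ∫ t : ℝ, gaussKernel t • v = v := by
    rw [integral_smul_const, integral_gaussKernel, one_smul]
  nth_rewrite 2 [← hv]
  refine tendsto_integral_filter_of_dominated_convergence (fun t => gaussBound 0 t * ‖v‖)
    (Eventually.of_forall fun ε =>
      (hβ.continuous_smear_integrand ε 0 v).aestronglyMeasurable)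
    (Eventually.of_forall fun ε => Eventually.of_forall
      (hβ.norm_smear_integrand_le (by simp) le_rfl))
    ((integrable_gaussBound 0).mul_const _) (Eventually.of_forall fun t => ?_)
  have hcont : Continuous fun ε : ℝ => gaussKernel t • β (ε * t) v :=
    ((hβ.strong_cont v).comp (by fun_prop)).const_smul _
  simpa [hβ.map_zero] using hcont.tendsto 0

end Smear

section Composition

variable {E : Type*} [NormedAddCommGroup E] [NormedSpace ℂ E] [CompleteSpace E]
  {α β : ℝ → E →L[ℂ] E} {z : ℂ} {a b c : E} {ε : ℝ}

lemma HasContVal.comp_smear {ρ : ℝ → E →L[ℂ] E} (h : HasContVal ρ z a b) (hβ : IsOneParamRep β)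
    (hcomm : ∀ s t : ℝ, (ρ s).comp (β t) = (β t).comp (ρ s)) (hε : ε ≠ 0) (u : ℂ) :
    HasContVal (fun t => (ρ t).comp (β t)) z (hβ.smear ε u a) (hβ.smear ε (u + z) b) := by
  obtain ⟨f, hf, hfa, rfl⟩ := hasContVal_iff_exists_isRegularOn.1 h
  refine hasContVal_iff_exists_isRegularOn.2 ⟨_, hf.smear hβ ε u, fun t => ?_, rfl⟩
  rw [hβ.smear_add_ofReal hε, hfa, ← hβ.apply_smear (hcomm t), hcomm]
  rfl

lemma HasContVal.smear_zero_eq (h : HasContVal β z a b) (hβ : IsOneParamRep β) (hε : ε ≠ 0) :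
    hβ.smear ε 0 a = hβ.smear ε (-z) b := by
  have hid := h.comp_smear hβ.neg (fun s t => hβ.comp_comm s (-t)) hε 0
  simp only [hβ.comp_neg, hβ.smear_neg, neg_zero, zero_add] at hid
  exact hid.eq_of_id

lemma IsOneParamRep.hasContVal_smear (hβ : IsOneParamRep β) (hε : ε ≠ 0) (z : ℂ) (a : E) :
    HasContVal β z (hβ.smear ε 0 a) (hβ.smear ε z a) := by
  have hid : HasContVal (fun _ => ContinuousLinearMap.id ℂ E) z a a :=
    hasContVal_iff_exists_isRegularOn.2 ⟨_, .const a, fun _ => rfl, rfl⟩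
  simpa using hid.comp_smear hβ (by simp) hε 0

lemma HasContVal.smear_of_comp (hab : HasContVal β z a b) (hbc : HasContVal α z b c)
    (hβ : IsOneParamRep β) (hcomm : ∀ s t : ℝ, (α s).comp (β t) = (β t).comp (α s))
    (hε : ε ≠ 0) :
    HasContVal (fun t => (α t).comp (β t)) z (hβ.smear ε 0 a) (hβ.smear ε 0 c) := by
  have h := hbc.comp_smear hβ hcomm hε (-z)
  rwa [neg_add_cancel, ← hab.smear_zero_eq hβ hε] at h

/-- `α_t = γ_t β_{-t}`, so that smearing with respect to `β_{-t}` recovers `α_z` from `γ_z`. -/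
lemma HasContVal.smear_of_comp_rep (h : HasContVal (fun t => (α t).comp (β t)) z a c)
    (hβ : IsOneParamRep β) (hcomm : ∀ s t : ℝ, (α s).comp (β t) = (β t).comp (α s))
    (hε : ε ≠ 0) : HasContVal α z (hβ.smear ε z a) (hβ.smear ε 0 c) := by
  have hγβ (s t : ℝ) :
      ((α s).comp (β s)).comp (β (-t)) = (β (-t)).comp ((α s).comp (β s)) := by
    rw [ContinuousLinearMap.comp_assoc, hβ.comp_comm, ← ContinuousLinearMap.comp_assoc, hcomm,
      ContinuousLinearMap.comp_assoc]
  simpa only [hβ.smear_neg, neg_neg, neg_add_cancel, neg_zero, ContinuousLinearMap.comp_assoc,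
    hβ.comp_neg, ContinuousLinearMap.comp_id] using h.comp_smear hβ.neg hγβ hε (-z)

lemma mem_of_isClosed_of_smear_mem (hβ : IsOneParamRep β) {S : Set (E × E)} (hS : IsClosed S)
    (h : ∀ ε : ℝ, ε ≠ 0 → (hβ.smear ε 0 a, hβ.smear ε 0 c) ∈ S) : (a, c) ∈ S :=
  hS.mem_of_tendsto (((hβ.tendsto_smear_zero a).prodMk_nhds (hβ.tendsto_smear_zero c)).mono_left
    (nhdsWithin_le_nhds (s := {0}ᶜ))) (eventually_of_mem self_mem_nhdsWithin h)

lemma closure_graph_comp_eq (hα : IsOneParamRep α) (hβ : IsOneParamRep β)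
    (hcomm : ∀ s t : ℝ, (α s).comp (β t) = (β t).comp (α s)) (z : ℂ) :
    closure {p : E × E | ∃ b, HasContVal β z p.1 b ∧ HasContVal α z b p.2} =
      {p : E × E | HasContVal (fun t => (α t).comp (β t)) z p.1 p.2} := by
  have hclosed := (hα.comp hβ hcomm).isClosed_setOf_hasContVal z
  refine (closure_minimal ?_ hclosed).antisymm ?_
  · rintro ⟨a, c⟩ ⟨b, hab, hbc⟩
    exact mem_of_isClosed_of_smear_mem hβ hclosed fun ε hε => hab.smear_of_comp hbc hβ hcomm hε
  · rintro ⟨a, c⟩ h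
    exact mem_of_isClosed_of_smear_mem hβ isClosed_closure fun ε hε => subset_closure
      ⟨_, hβ.hasContVal_smear hε z a, h.smear_of_comp_rep hβ hcomm hε⟩

end Composition

/-- For commuting one-parameter representations `α, β` and `γ_t = α_t β_t`, the compositions
`α_z ∘ β_z` and `β_z ∘ α_z` are closable with the same closure, namely `γ_z`:  the closure of
each composed graph equals the graph of `γ_z`. -/
theorem commuting_composition_closure
    {E : Type*} [NormedAddCommGroup E] [NormedSpace ℂ E] [CompleteSpace E]
    (α β : ℝ → E →L[ℂ] E) (hα : IsOneParamRep α) (hβ : IsOneParamRep β)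
    (hcomm : ∀ s t : ℝ, (α s).comp (β t) = (β t).comp (α s)) (z : ℂ) :
    closure {p : E × E | ∃ b, HasContVal β z p.1 b ∧ HasContVal α z b p.2}
        = {p : E × E | HasContVal (fun t => (α t).comp (β t)) z p.1 p.2} ∧
    closure {p : E × E | ∃ b, HasContVal α z p.1 b ∧ HasContVal β z b p.2}
        = {p : E × E | HasContVal (fun t => (α t).comp (β t)) z p.1 p.2} := by
  refine ⟨closure_graph_comp_eq hα hβ hcomm z, ?_⟩
  simpa only [hcomm] using closure_graph_comp_eq hβ hα (fun s t => (hcomm t s).symm) z
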